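/- arXiv:1509.03868 — 4 statements merged into one kernel-verified Lean document; each statement's English description precedes it below -/
import Mathlib

section
/- Let R ⊆ S be a finite ring extension with R local with maximal ideal M, and suppose S is free as an R-module of rank n ≥ 2. Then the conductor (R : S) = {r ∈ R : rS ⊆ R} is zero. -/
/-!
Let `b` be a basis of `S` with at least two elements, let `a j` be the coordinates of `1`, and
suppose `r • S ⊆ R • 1`. For `i ≠ j` write `r • b i = c • 1`. Comparing coordinates gives
`c * a i = r` and `c * a j = 0`, so `r * a j = a i * (c * a j) = 0`. As `j` was arbitrary,
`r • 1 = 0`, so `r` annihilates the nonzero free module `S`.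
-/

open Module Submodule

theorem smul_eq_zero_of_forall_smul_mem_span_singleton {ι R M : Type*} [CommSemiring R]
    [AddCommMonoid M] [Module R M] [Nontrivial ι] (b : Basis ι R M) {x : M} {r : R}
    (hr : ∀ y : M, r • y ∈ span R {x}) : r • x = 0 := by
  refine b.ext_elem fun j => ?_
  obtain ⟨i, hij⟩ := exists_ne j
  obtain ⟨c, hc⟩ := mem_span_singleton.1 (hr (b i))
  have coord_i : c * b.repr x i = r := by simpa using congr(b.repr $hc i)
  have coord_j : c * b.repr x j = 0 := by simpa [hij] using congr(b.repr $hc j)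
  calc b.repr (r • x) j = r * b.repr x j := by simp
    _ = b.repr x i * (c * b.repr x j) := by rw [← coord_i]; ring
    _ = b.repr 0 j := by simp [coord_j]

theorem conductor_eq_zero_of_free_rank_ge_two_general {ι R S : Type*} [CommSemiring R]
    [Semiring S] [Algebra R S] [Nontrivial ι] (b : Basis ι R S) {r : R}
    (hr : ∀ s : S, algebraMap R S r * s ∈ (algebraMap R S).rangeS) : r = 0 := by
  have smul_mem_span_one (s : S) : r • s ∈ span R {(1 : S)} := by
    obtain ⟨c, hc⟩ := hr s
    exact mem_span_singleton.2 ⟨c, by rw [← Algebra.algebraMap_eq_smul_one, hc, Algebra.smul_def]⟩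
  have smul_one_eq_zero : r • (1 : S) = 0 :=
    smul_eq_zero_of_forall_smul_mem_span_singleton b smul_mem_span_one
  obtain ⟨i⟩ : Nonempty ι := inferInstance
  have smul_basis_eq_zero : r • b i = 0 := by rw [← smul_one_mul, smul_one_eq_zero, zero_mul]
  simpa using congr(b.repr $smul_basis_eq_zero i)

/-- If `R ⊆ S` is a finite extension with `R` local and `S` free of rank `n ≥ 2` over `R`,
then the conductor `(R : S)` is zero. -/
theorem conductor_eq_zero_of_free_rank_ge_two
    (R S : Type*) [CommRing R] [CommRing S] [IsLocalRing R] [Algebra R S]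
    (hinj : Function.Injective (algebraMap R S))
    [Module.Finite R S] [Module.Free R S]
    (n : ℕ) (hn : 2 ≤ n) (hrank : Module.finrank R S = n)
    (r : R) (hr : ∀ s : S, algebraMap R S r * s ∈ (algebraMap R S).range) :
    r = 0 := by
  have : Nontrivial (Fin n) := Fin.nontrivial_iff_two_le.2 hn
  exact conductor_eq_zero_of_free_rank_ge_two_general (finBasisOfFinrankEq R S hrank) hr
end

section
/- Let R ⊆ S be a module-finite étale ring extension with R Artinian and P a prime ideal of R. If the fiber cardinality n(P) := |Spec(κ(P) ⊗_R S)| equals the dimension [S/PS : R/P] of S/PS as an R/P-vector space, then the localization S_P is isomorphic as an R_P-algebra to (R_P)^{n(P)}. -/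
/-!
Localize at `P`. As `S_P` is finite over the zero-dimensional local ring `R_P`, its spectrum is
finite and discrete, so `S_P` is the product of its local rings, and there are `n(P)` of them. By
flatness each factor is free of positive rank over `R_P`, and the ranks add up to
`rank S_P = [S/PS : R/P]`. If this sum equals the number of factors, then every factor has rank one,
that is, coincides with `R_P`.
-/

open Module TensorProduct

theorem toAlgebra_algebraMap_comp_eq {R S T : Type*} [CommSemiring R] [CommSemiring S]
    [CommSemiring T] [Algebra R S] [Algebra S T] [i : Algebra R T] [IsScalarTower R S T] :
    ((algebraMap S T).comp (algebraMap R S)).toAlgebra = i :=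
  Algebra.algebra_ext _ _ fun r ↦ (IsScalarTower.algebraMap_apply R S T r).symm

theorem quotientMap_toAlgebra_eq {R S : Type*} [CommRing R] [CommRing S] [Algebra R S]
    (I : Ideal R) :
    (Ideal.quotientMap (I.map (algebraMap R S)) (algebraMap R S) Ideal.le_comap_map).toAlgebra =
      Ideal.Quotient.algebraQuotientMapQuotient :=
  Algebra.algebra_ext _ _ fun _ ↦ rfl

section FinitePiAlgebra

variable {A ι : Type*} [CommRing A] [Finite ι]

theorem bijective_algebraMap_of_finrank_pi_le_card [Nontrivial A] (B : ι → Type*)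
    [∀ i, Ring (B i)] [∀ i, Algebra A (B i)] [∀ i, Nontrivial (B i)]
    [∀ i, Module.Free A (B i)] [∀ i, Module.Finite A (B i)]
    (h : finrank A (Π i, B i) ≤ Nat.card ι) (i : ι) :
    Function.Bijective (algebraMap A (B i)) := by
  cases nonempty_fintype ι
  have one_le (j : ι) : 1 ≤ finrank A (B j) :=
    (finrank_pos_iff_of_free A (B j)).mpr inferInstance
  have sum_eq : ∑ _j : ι, 1 = ∑ j, finrank A (B j) :=
    (Finset.sum_le_sum fun j _ ↦ one_le j).antisymm (by simpa [finrank_pi_fintype] using h)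
  have finrank_eq_one : 1 = finrank A (B i) :=
    (Finset.sum_eq_sum_iff_of_le fun j _ ↦ one_le j).mp sum_eq i (Finset.mem_univ i)
  exact Free.bijective_algebraMap_of_finrank_eq_one finrank_eq_one.symm

theorem nonempty_algEquiv_pi_of_finrank_le_card [IsLocalRing A] {B : Type*} [CommRing B]
    [Algebra A B] [Module.Finite A B] [Module.Flat A B] (C : ι → Type*) [∀ i, CommRing (C i)]
    [∀ i, Algebra A (C i)] [∀ i, Nontrivial (C i)] (e : B ≃ₐ[A] Π i, C i)
    (h : finrank A B ≤ Nat.card ι) : Nonempty (B ≃ₐ[A] (ι → A)) := by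
  classical
  have hfinite (i : ι) : Module.Finite A (C i) :=
    .of_surjective ((LinearMap.proj i).comp e.toLinearMap)
      ((Function.surjective_eval i).comp e.surjective)
  have hflat (i : ι) : Module.Flat A (C i) :=
    have : Module.Flat A (Π i, C i) := .of_linearEquiv e.symm.toLinearEquiv
    .of_retract (LinearMap.single A C i) (LinearMap.proj i) (by ext; simp)
  have hfree (i : ι) : Module.Free A (C i) := free_of_flat_of_isLocalRing
  have hbij := bijective_algebraMap_of_finrank_pi_le_card C (e.toLinearEquiv.finrank_eq ▸ h)
  exact ⟨e.trans (AlgEquiv.piCongrRight fun i ↦ .ofBijective (Algebra.ofId A (C i)) (hbij i)).symm⟩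

end FinitePiAlgebra

theorem nonempty_algEquiv_pi_of_finrank_le_card_primeSpectrum {A B : Type*} [CommRing A]
    [IsLocalRing A] [CommRing B] [Algebra A B] [Module.Finite A B] [Module.Flat A B]
    [DiscreteTopology (PrimeSpectrum B)] (h : finrank A B ≤ Nat.card (PrimeSpectrum B)) :
    Nonempty (B ≃ₐ[A] (PrimeSpectrum B → A)) :=
  have : Finite (PrimeSpectrum B) := finite_of_compact_of_discrete
  nonempty_algEquiv_pi_of_finrank_le_card _
    ((PrimeSpectrum.toPiLocalizationEquiv B).restrictScalars A) h

section LocalizationAtPrime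

variable {R S : Type*} [CommRing R] [CommRing S] [Algebra R S] (P : Ideal R) [P.IsPrime]

variable {P} in
theorem discreteTopology_primeSpectrum_localization_of_mem_minimalPrimes [Module.Finite R S]
    (hP : P ∈ minimalPrimes R) :
    DiscreteTopology
      (PrimeSpectrum (Localization (Algebra.algebraMapSubmonoid S P.primeCompl))) :=
  have : Ring.KrullDimLE 0 (Localization.AtPrime P) := .of_isLocalization P hP _
  have : DiscreteTopology (PrimeSpectrum (Localization.AtPrime P)) :=
    PrimeSpectrum.discreteTopology_iff_finite_and_krullDimLE_zero.mpr ⟨inferInstance, inferInstance⟩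
  have : Module.Finite (Localization.AtPrime P)
      (Localization (Algebra.algebraMapSubmonoid S P.primeCompl)) :=
    .of_isLocalization R S P.primeCompl
  Algebra.QuasiFinite.discreteTopology_primeSpectrum (Localization.AtPrime P) _

theorem disjoint_algebraMapSubmonoid_primeCompl_iff (Q : Ideal S) :
    Disjoint (Algebra.algebraMapSubmonoid S P.primeCompl : Set S) Q ↔
      Q.comap (algebraMap R S) ≤ P := by
  simp only [Set.disjoint_left, Algebra.algebraMapSubmonoid, Submonoid.coe_map,
    Set.forall_mem_image]
  exact forall_congr' fun _ ↦ not_imp_not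

variable {P} in
/-- The identification of `Spec S_P` with the fiber of `Spec S → Spec R` over a minimal prime `P`,
sending a prime of `S_P` to its contraction to `S`. -/
noncomputable def primeSpectrumLocalizationEquiv (hP : P ∈ minimalPrimes R) (Sₚ : Type*)
    [CommRing Sₚ] [Algebra S Sₚ] [IsLocalization (Algebra.algebraMapSubmonoid S P.primeCompl) Sₚ] :
    PrimeSpectrum Sₚ ≃ {Q : Ideal S // Q.IsPrime ∧ Q.comap (algebraMap R S) = P} :=
  (PrimeSpectrum.equivSubtype Sₚ).toEquiv.trans <|
    (IsLocalization.orderIsoOfPrime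
      (Algebra.algebraMapSubmonoid S P.primeCompl) Sₚ).toEquiv.trans <|
      Equiv.subtypeEquivRight fun Q ↦ and_congr_right fun _ ↦
        (disjoint_algebraMapSubmonoid_primeCompl_iff P Q).trans
          ⟨fun h ↦ h.antisymm (hP.2 ⟨inferInstance, bot_le⟩ h), le_of_eq⟩

theorem finrank_quotient_tensorProduct_eq_rankAtStalk (M : Type*) [AddCommGroup M] [Module R M]
    [Module.Flat R M] [Module.Finite R M] :
    finrank (R ⧸ P) ((R ⧸ P) ⊗[R] M) = rankAtStalk M ⟨P, ‹P.IsPrime›⟩ := by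
  have comap_bot : (⊥ : PrimeSpectrum (R ⧸ P)).comap (algebraMap R (R ⧸ P)) = ⟨P, ‹P.IsPrime›⟩ :=
    PrimeSpectrum.ext Ideal.mk_ker
  rw [← Ideal.finrank_fiber_eq_finrank (⊥ : PrimeSpectrum (R ⧸ P)).asIdeal, ← rankAtStalk_eq,
    rankAtStalk_baseChange, comap_bot]

theorem finrank_localization_algebraMapSubmonoid_eq_rankAtStalk :
    finrank (Localization.AtPrime P) (Localization (Algebra.algebraMapSubmonoid S P.primeCompl)) =
      rankAtStalk S ⟨P, ‹P.IsPrime›⟩ :=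
  (IsLocalizedModule.mapEquiv P.primeCompl (IsScalarTower.toAlgHom R S _).toLinearMap
    (LocalizedModule.mkLinearMap P.primeCompl S) (Localization.AtPrime P) (.refl R S)).finrank_eq

theorem finrank_localization_eq_finrank_quotient [Module.Flat R S] [Module.Finite R S] :
    finrank (Localization.AtPrime P) (Localization (Algebra.algebraMapSubmonoid S P.primeCompl)) =
      finrank (R ⧸ P) (S ⧸ P.map (algebraMap R S)) := by
  rw [finrank_localization_algebraMapSubmonoid_eq_rankAtStalk,
    ← finrank_quotient_tensorProduct_eq_rankAtStalk P S]
  exact (Algebra.TensorProduct.quotIdealMapEquivQuotTensor S P).toLinearEquiv.finrank_eq.symm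

end LocalizationAtPrime

theorem etale_fiber_card_eq_rank_localization_trivial_general
    {R S : Type*} [CommRing R] [CommRing S] [Algebra R S] [Module.Flat R S] [Module.Finite R S]
    {P : Ideal R} [P.IsPrime] (hP : P ∈ minimalPrimes R)
    (hcard : Nat.card {Q : Ideal S // Q.IsPrime ∧ Q.comap (algebraMap R S) = P} =
      finrank (R ⧸ P) (S ⧸ P.map (algebraMap R S))) :
    Nonempty (Localization (Algebra.algebraMapSubmonoid S P.primeCompl) ≃ₐ[Localization.AtPrime P]
      (Fin (Nat.card {Q : Ideal S // Q.IsPrime ∧ Q.comap (algebraMap R S) = P}) →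
        Localization.AtPrime P)) := by
  let Rₚ := Localization.AtPrime P
  let Sₚ := Localization (Algebra.algebraMapSubmonoid S P.primeCompl)
  have : Module.Finite Rₚ Sₚ := .of_isLocalization R S P.primeCompl
  have : DiscreteTopology (PrimeSpectrum Sₚ) :=
    discreteTopology_primeSpectrum_localization_of_mem_minimalPrimes hP
  let fiberEquiv := primeSpectrumLocalizationEquiv (S := S) hP Sₚ
  have : Finite (PrimeSpectrum Sₚ) := finite_of_compact_of_discrete
  have card_eq : Nat.card (PrimeSpectrum Sₚ) = _ := Nat.card_congr fiberEquiv
  have finrank_eq : finrank Rₚ Sₚ = Nat.card (PrimeSpectrum Sₚ) := by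
    rw [finrank_localization_eq_finrank_quotient, card_eq, hcard]
  obtain ⟨e⟩ := nonempty_algEquiv_pi_of_finrank_le_card_primeSpectrum finrank_eq.le
  exact ⟨e.trans (AlgEquiv.piCongrLeft Rₚ (fun _ ↦ Rₚ) (Finite.equivFinOfCardEq card_eq))⟩

/-- For a module-finite étale extension `R ⊆ S` with `R` Artinian and `P` a prime of `R`:
if the fiber cardinality at `P` equals `[S/PS : R/P]`, then `S_P ≅ (R_P)^{n(P)}`. -/
theorem etale_fiber_card_eq_rank_localization_trivial
    (R S : Type*) [CommRing R] [CommRing S] [Algebra R S] [IsArtinianRing R]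
    (hinj : Function.Injective (algebraMap R S))
    [Module.Flat R S] [Module.Finite R S] (hfp : Algebra.FinitePresentation R S)
    (hunr : Subsingleton (Ω[S⁄R]))
    (P : Ideal R) [P.IsPrime]
    (hcard : letI : Algebra (R ⧸ P) (S ⧸ P.map (algebraMap R S)) :=
        (Ideal.quotientMap (P.map (algebraMap R S)) (algebraMap R S)
          Ideal.le_comap_map).toAlgebra
      Nat.card {Q : Ideal S // Q.IsPrime ∧ Q.comap (algebraMap R S) = P}
        = Module.finrank (R ⧸ P) (S ⧸ P.map (algebraMap R S))) :
    letI : Algebra R (Localization (Algebra.algebraMapSubmonoid S P.primeCompl)) :=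
      ((algebraMap S (Localization (Algebra.algebraMapSubmonoid S P.primeCompl))).comp
        (algebraMap R S)).toAlgebra
    Nonempty ((Localization (Algebra.algebraMapSubmonoid S P.primeCompl)) ≃ₐ[R]
      (Fin (Nat.card {Q : Ideal S // Q.IsPrime ∧ Q.comap (algebraMap R S) = P}) →
        Localization.AtPrime P)) := by
  rw [quotientMap_toAlgebra_eq] at hcard
  rw [toAlgebra_algebraMap_comp_eq]
  exact (etale_fiber_card_eq_rank_localization_trivial_general
    P.mem_minimalPrimes_of_krullDimLE_zero hcard).map (·.restrictScalars R)
end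

section
/- A subintegral ring extension R ⊂ S with R ≠ S that is of finite type is never unramified; that is, if R ⊊ S is subintegral and of finite type, then Ω_{S/R} ≠ 0. -/
/-!
Let `R → S` be injective on spectra with trivial residue field extensions. Then two `R`-algebra maps
from `S` to a domain have the same kernel, hence agree, so every prime of `S ⊗[R] S` contains the
ideal `I` of the diagonal. If moreover `R → S` is unramified of finite type, some `t ≡ 1` modulo `I`
kills every `1 ⊗ s - s ⊗ 1`; such a `t` is a unit, so `R → S` is an epimorphism. Finite epimorphisms
are surjective.
-/

open scoped TensorProduct

section TrivialResidueFieldExtensions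

variable {R S : Type*} [CommRing R] [CommRing S] [Algebra R S]

lemma exists_smul_sub_algebraMap_mem_of_residueFieldMap_surjective (Q : Ideal S) [Q.IsPrime]
    (hres : Function.Surjective
      (Ideal.ResidueField.map (Q.under R) Q (algebraMap R S) rfl)) (s : S) :
    ∃ a b : R, b ∉ Q.under R ∧ b • s - algebraMap R S a ∈ Q := by
  obtain ⟨x, hx⟩ := hres (algebraMap S Q.ResidueField s)
  obtain ⟨a, b, hb, rfl⟩ := IsFractionRing.div_surjective (R ⧸ Q.under R) x
  obtain ⟨a, rfl⟩ := Ideal.Quotient.mk_surjective a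
  obtain ⟨b, rfl⟩ := Ideal.Quotient.mk_surjective b
  have hbQ : b ∉ Q.under R := fun h ↦
    nonZeroDivisors.ne_zero hb (Ideal.Quotient.eq_zero_iff_mem.mpr h)
  have hb_ne : algebraMap S Q.ResidueField (algebraMap R S b) ≠ 0 := fun h ↦
    hbQ (Ideal.mem_comap.mpr (Ideal.algebraMap_residueField_eq_zero.mp h))
  rw [map_div₀, Ideal.algebraMap_quotient_residueField_mk,
    Ideal.algebraMap_quotient_residueField_mk, Ideal.ResidueField.map_algebraMap,
    Ideal.ResidueField.map_algebraMap, div_eq_iff hb_ne] at hx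
  refine ⟨a, b, hbQ, Ideal.algebraMap_residueField_eq_zero.mp ?_⟩
  rw [map_sub, hx, Algebra.smul_def, map_mul, mul_comm, sub_self]

lemma algHom_eq_of_ker_eq_of_residueFieldMap_surjective {K : Type*} [CommRing K] [IsDomain K]
    [Algebra R K] {Q : Ideal S} [Q.IsPrime] {f g : S →ₐ[R] K}
    (hf : RingHom.ker f = Q) (hg : RingHom.ker g = Q)
    (hres : Function.Surjective (Ideal.ResidueField.map (Q.under R) Q (algebraMap R S) rfl)) :
    f = g := by
  ext s
  obtain ⟨a, b, hb, hs⟩ := exists_smul_sub_algebraMap_mem_of_residueFieldMap_surjective Q hres s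
  have hb_ne : algebraMap R K b ≠ 0 := by
    rwa [Ideal.mem_comap, ← hf, RingHom.mem_ker, AlgHom.commutes] at hb
  have mul_map_eq (φ : S →ₐ[R] K) (hφ : RingHom.ker φ = Q) :
      algebraMap R K b * φ s = algebraMap R K a := by
    rwa [← hφ, RingHom.mem_ker, map_sub, map_smul, AlgHom.commutes, Algebra.smul_def,
      sub_eq_zero] at hs
  exact mul_left_cancel₀ hb_ne ((mul_map_eq f hf).trans (mul_map_eq g hg).symm)

lemma algHom_ker_eq_of_comap_injective {K : Type*} [CommRing K] [IsDomain K] [Algebra R K]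
    (hspec : Function.Injective (PrimeSpectrum.comap (algebraMap R S))) (f g : S →ₐ[R] K) :
    RingHom.ker f = RingHom.ker g := by
  have hcomap : PrimeSpectrum.comap (algebraMap R S) ⟨RingHom.ker f, RingHom.ker_isPrime f⟩ =
      PrimeSpectrum.comap (algebraMap R S) ⟨RingHom.ker g, RingHom.ker_isPrime g⟩ := by
    ext r
    simp only [PrimeSpectrum.comap_asIdeal, Ideal.mem_comap, RingHom.mem_ker, AlgHom.commutes]
  exact congrArg PrimeSpectrum.asIdeal (hspec hcomap)

lemma kaehlerDifferential_ideal_le_nilradical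
    (hspec : Function.Injective (PrimeSpectrum.comap (algebraMap R S)))
    (hres : ∀ (Q : Ideal S) [Q.IsPrime],
      Function.Surjective (Ideal.ResidueField.map (Q.under R) Q (algebraMap R S) rfl)) :
    KaehlerDifferential.ideal R S ≤ nilradical (S ⊗[R] S) := by
  rw [nilradical_eq_sInf, ← KaehlerDifferential.span_range_eq_ideal, Ideal.span_le]
  rintro _ ⟨s, rfl⟩
  refine Ideal.mem_sInf.mpr fun {P} (hP : P.IsPrime) ↦ ?_
  let f : S →ₐ[R] (S ⊗[R] S) ⧸ P :=
    (Ideal.Quotient.mkₐ R P).comp Algebra.TensorProduct.includeRight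
  let g : S →ₐ[R] (S ⊗[R] S) ⧸ P :=
    (Ideal.Quotient.mkₐ R P).comp Algebra.TensorProduct.includeLeft
  have := RingHom.ker_isPrime g
  have hfg : f = g := algHom_eq_of_ker_eq_of_residueFieldMap_surjective
    (algHom_ker_eq_of_comap_injective hspec f g) rfl (hres (RingHom.ker g))
  exact Ideal.Quotient.eq.mp (DFunLike.congr_fun hfg s)

end TrivialResidueFieldExtensions

lemma isEpi_of_kaehlerDifferential_ideal_le_jacobson {R S : Type*} [CommRing R] [CommRing S]
    [Algebra R S] [Algebra.EssFiniteType R S] [Algebra.FormallyUnramified R S]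
    (hI : KaehlerDifferential.ideal R S ≤ Ideal.jacobson ⊥) : Algebra.IsEpi R S := by
  obtain ⟨t, ht, ht_one⟩ :=
    Algebra.FormallyUnramified.iff_exists_tensorProduct.mp ‹Algebra.FormallyUnramified R S›
  have ht_mem : t - 1 ∈ KaehlerDifferential.ideal R S := by
    rw [KaehlerDifferential.ideal, RingHom.mem_ker, map_sub, map_one, sub_eq_zero]
    exact ht_one
  have ht_unit : IsUnit t := by
    simpa only [mul_one, sub_add_cancel] using Ideal.mem_jacobson_bot.mp (hI ht_mem) 1
  exact (Algebra.isEpi_iff_forall_one_tmul_eq R S).mpr fun s ↦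
    sub_eq_zero.mp (ht_unit.mul_left_eq_zero.mp (ht s))

theorem subintegral_not_unramified_general
    (R S : Type*) [CommRing R] [CommRing S] [Algebra R S]
    [Algebra.FiniteType R S] [Algebra.IsIntegral R S]
    (hne : ¬ Function.Surjective (algebraMap R S))
    (hspec : Function.Injective (PrimeSpectrum.comap (algebraMap R S)))
    (hres : ∀ (Q : Ideal S) [Q.IsPrime],
      Function.Surjective (Ideal.ResidueField.map (Q.under R) Q (algebraMap R S) rfl)) :
    ¬ Subsingleton (Ω[S⁄R]) := by
  intro hΩ
  have : Algebra.FormallyUnramified R S := ⟨hΩ⟩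
  have : Module.Finite R S := Algebra.IsIntegral.finite
  have hepi : Algebra.IsEpi R S := isEpi_of_kaehlerDifferential_ideal_le_jacobson
    ((kaehlerDifferential_ideal_le_nilradical hspec hres).trans Ideal.radical_le_jacobson)
  exact hne (Algebra.isEpi_iff_surjective_algebraMap_of_finite.mp hepi)

/-- A proper subintegral extension of finite type is never unramified: `Ω[S⁄R] ≠ 0`. -/
theorem subintegral_not_unramified
    (R S : Type*) [CommRing R] [CommRing S] [Algebra R S]
    (hinj : Function.Injective (algebraMap R S))
    (hne : ¬ Function.Surjective (algebraMap R S))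
    (hft : Algebra.FiniteType R S)
    [Algebra.IsIntegral R S]
    (hspec : Function.Bijective (PrimeSpectrum.comap (algebraMap R S)))
    (hres : ∀ (Q : Ideal S) (hQ : Q.IsPrime),
      haveI := hQ
      haveI := Localization.isLocalHom_localRingHom (Q.comap (algebraMap R S)) Q
        (algebraMap R S) rfl
      Function.Bijective (IsLocalRing.ResidueField.map
        (Localization.localRingHom (Q.comap (algebraMap R S)) Q (algebraMap R S) rfl))) :
    ¬ Subsingleton (Ω[S⁄R]) :=
  subintegral_not_unramified_general R S hne hspec.1 fun Q hQ ↦ (hres Q hQ).2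
end

section
/- Let (R, M) be a local Henselian commutative ring and R ⊆ A a module-finite ring extension. Then A is isomorphic to the product of its localizations at its (finitely many) maximal ideals: A ≅ ∏_{N ∈ Max(A)} A_N. -/
/-! Over a Henselian local ring `R` with residue field `k`, every `R`-algebra map `S → k` from an
étale algebra lifts to a map `S → R`: near its kernel `S` is standard étale, so the map is a simple
root in `k` of a monic polynomial, which lifts by the Henselian property.

Zariski's main theorem provides, for each maximal ideal `N` of a finite `R`-algebra `A`, an étale
neighbourhood `R'` of the closed point of `R`, with trivial residue field extension, and an
idempotent of `R' ⊗[R] A` isolating a prime over `N`. Base change along a section `R' → R` turns it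
into an idempotent `e` of `A` that lies in every maximal ideal except `N`. These idempotents map to
the standard idempotents of `∏ N, A_N`, and `A → A_N` is surjective because every `s ∉ N` is
comaximal with `1 - e`. -/

open TensorProduct

section IdempotentsAndLocalizations

variable {A : Type*} [CommRing A] {e : A}

theorem algebraMap_atPrime_eq_one_of_isIdempotentElem (he : IsIdempotentElem e) {p : Ideal A}
    [p.IsPrime] (hep : e ∉ p) : algebraMap A (Localization.AtPrime p) e = 1 :=
  (IsIdempotentElem.iff_eq_one_of_isUnit (IsLocalization.map_units _ (⟨e, hep⟩ : p.primeCompl))).mp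
    (he.map _)

theorem algebraMap_atPrime_eq_zero_of_isIdempotentElem (he : IsIdempotentElem e) {p : Ideal A}
    [p.IsPrime] (hep : e ∈ p) : algebraMap A (Localization.AtPrime p) e = 0 := by
  have hep' : 1 - e ∉ p := fun h => p.one_notMem (by simpa using add_mem h hep)
  simpa using algebraMap_atPrime_eq_one_of_isIdempotentElem he.one_sub hep'

theorem isCoprime_one_sub_of_notMem {N : Ideal A} (heN : ∀ M : Ideal A, M.IsMaximal → e ∉ M → M = N)
    {s : A} (hs : s ∉ N) : IsCoprime s (1 - e) := by
  rw [← Ideal.isCoprime_span_singleton_iff, Ideal.isCoprime_iff_sup_eq]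
  by_contra hne
  obtain ⟨M, hM, hle⟩ := Ideal.exists_le_maximal _ hne
  rw [sup_le_iff, Ideal.span_singleton_le_iff_mem, Ideal.span_singleton_le_iff_mem] at hle
  have heM : e ∉ M := fun h => hM.isPrime.one_notMem (by simpa using add_mem hle.2 h)
  exact hs (heN M hM heM ▸ hle.1)

theorem algebraMap_atPrime_surjective_of_isIdempotentElem (he : IsIdempotentElem e) {N : Ideal A}
    [N.IsPrime] (heN : e ∉ N) (heN' : ∀ M : Ideal A, M.IsMaximal → e ∉ M → M = N) :
    Function.Surjective (algebraMap A (Localization.AtPrime N)) := by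
  intro y
  obtain ⟨⟨a, s⟩, hy⟩ := IsLocalization.surj N.primeCompl y
  obtain ⟨u, v, huv⟩ := isCoprime_one_sub_of_notMem heN' s.2
  have hu : algebraMap A (Localization.AtPrime N) u * algebraMap A _ s = 1 := by
    simpa [algebraMap_atPrime_eq_one_of_isIdempotentElem he heN]
      using congrArg (algebraMap A (Localization.AtPrime N)) huv
  exact ⟨u * a, by rw [map_mul, ← hy, mul_left_comm, hu, mul_one]⟩

theorem toPiLocalization_bijective_of_forall_exists_isIdempotentElem [Finite (MaximalSpectrum A)]
    (h : ∀ N : Ideal A, N.IsMaximal → ∃ e : A, IsIdempotentElem e ∧ e ∉ N ∧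
      ∀ M : Ideal A, M.IsMaximal → e ∉ M → M = N) :
    Function.Bijective (MaximalSpectrum.toPiLocalization A) := by
  classical
  refine ⟨MaximalSpectrum.toPiLocalization_injective A, fun y => ?_⟩
  have := Fintype.ofFinite (MaximalSpectrum A)
  choose e he heN heN' using fun N : MaximalSpectrum A => h N.asIdeal N.isMaximal
  choose a ha using fun N : MaximalSpectrum A =>
    algebraMap_atPrime_surjective_of_isIdempotentElem (he N) (heN N) (heN' N) (y N)
  have hsingle (N : MaximalSpectrum A) :
      MaximalSpectrum.toPiLocalization A (e N * a N) = Pi.single N (y N) := by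
    funext M
    rw [MaximalSpectrum.toPiLocalization_apply_apply, map_mul]
    obtain rfl | hMN := eq_or_ne M N
    · rw [algebraMap_atPrime_eq_one_of_isIdempotentElem (he M) (heN M), ha, one_mul,
        Pi.single_eq_same]
    · have heM : e N ∈ M.asIdeal := by
        by_contra heM
        exact hMN (MaximalSpectrum.ext (heN' N M.asIdeal M.isMaximal heM))
      rw [algebraMap_atPrime_eq_zero_of_isIdempotentElem (he N) heM, zero_mul,
        Pi.single_eq_of_ne hMN]
  exact ⟨∑ N, e N * a N, by simp only [map_sum, hsingle, Finset.univ_sum_single]⟩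

end IdempotentsAndLocalizations

section LyingOver

variable {R A : Type*} [CommRing R] [CommRing A] [Algebra R A]

theorem liesOver_maximalIdeal_of_isIntegral [IsLocalRing R] [Algebra.IsIntegral R A] (N : Ideal A)
    [N.IsMaximal] : N.LiesOver (IsLocalRing.maximalIdeal R) :=
  ⟨(IsLocalRing.eq_maximalIdeal (Ideal.IsMaximal.under R N)).symm⟩

variable (R A) in
theorem finite_maximalSpectrum_of_quasiFinite [Finite (MaximalSpectrum R)] [Algebra.IsIntegral R A]
    [Algebra.QuasiFinite R A] : Finite (MaximalSpectrum A) := by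
  let under (N : MaximalSpectrum A) : MaximalSpectrum R := ⟨N.asIdeal.under R, inferInstance⟩
  refine Set.finite_univ_iff.mp (Set.finite_univ.preimage' (f := under) fun m _ => ?_)
  refine ((Algebra.QuasiFinite.finite_primesOver (S := A) m.asIdeal).preimage
    (fun _ _ _ _ h => MaximalSpectrum.ext h)).subset ?_
  rintro N rfl
  exact ⟨N.isMaximal.isPrime, ⟨rfl⟩⟩

end LyingOver

section Henselian

variable {R : Type*} [CommRing R] [HenselianLocalRing R]

section ResidueField

variable {k : Type*} [Field k] [Algebra R k]

theorem exists_hasMap_algebraMap_eq (hk : Function.Surjective (algebraMap R k))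
    (P : StandardEtalePair R) {x : k} (hx : P.HasMap x) :
    ∃ a : R, P.HasMap a ∧ algebraMap R k a = x := by
  have := hk.isLocalHom
  obtain ⟨a₀, rfl⟩ := hk x
  have hker (r : R) : r ∈ IsLocalRing.maximalIdeal R ↔ algebraMap R k r = 0 := by
    rw [← IsLocalRing.ker_eq_maximalIdeal _ hk, RingHom.mem_ker]
  have haeval (p : Polynomial R) (r : R) :
      Polynomial.aeval (algebraMap R k r) p = algebraMap R k (p.eval r) := by
    rw [Polynomial.aeval_algebraMap_apply, Polynomial.coe_aeval_eq_eval]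
  obtain ⟨a, hroot, ha⟩ := HenselianLocalRing.is_henselian P.f P.monic_f a₀
    ((hker _).mpr (haeval _ _ ▸ hx.1))
    (.of_map (algebraMap R k) _ (haeval _ _ ▸ hx.isUnit_derivative_f))
  rw [hker, map_sub, sub_eq_zero] at ha
  refine ⟨a, ⟨by simpa using hroot, ?_⟩, ha⟩
  rw [Polynomial.coe_aeval_eq_eval]
  exact .of_map (algebraMap R k) _ (by rw [← haeval, ha]; exact hx.2)

variable {S : Type*} [CommRing S] [Algebra R S]

theorem exists_algHom_lift_of_isStandardEtale [Algebra.IsStandardEtale R S]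
    (hk : Function.Surjective (algebraMap R k)) (φ : S →ₐ[R] k) :
    ∃ σ : S →ₐ[R] R, (Algebra.ofId R k).comp σ = φ := by
  obtain ⟨P⟩ := Algebra.IsStandardEtale.nonempty_standardEtalePresentation (R := R) (S := S)
  obtain ⟨a, ha, hax⟩ := exists_hasMap_algebraMap_eq hk P.P (P.hasMap.map φ)
  refine ⟨(P.P.lift a ha).comp P.equivRing.toAlgHom, P.hom_ext ?_⟩
  simpa [Algebra.ofId_apply] using hax

theorem exists_algHom_lift_of_etale [Algebra.Etale R S]
    (hk : Function.Surjective (algebraMap R k)) (φ : S →ₐ[R] k) :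
    ∃ σ : S →ₐ[R] R, (Algebra.ofId R k).comp σ = φ := by
  have : (RingHom.ker φ).IsPrime := RingHom.ker_isPrime φ
  obtain ⟨f, hf, _⟩ := Algebra.IsEtaleAt.exists_isStandardEtale (R := R) (RingHom.ker φ)
  let φf : Localization.Away f →ₐ[R] k :=
    IsLocalization.Away.liftAlgHom f (f := φ) (isUnit_iff_ne_zero.mpr hf)
  obtain ⟨σ, hσ⟩ := exists_algHom_lift_of_isStandardEtale hk φf
  refine ⟨σ.comp (IsScalarTower.toAlgHom R S _), ?_⟩
  rw [← AlgHom.comp_assoc, hσ]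
  ext s
  simp [φf]

end ResidueField

theorem exists_algHom_comap_maximalIdeal_eq {R' : Type*} [CommRing R'] [Algebra R R']
    [Algebra.Etale R R'] (P : Ideal R') [P.IsPrime] [P.LiesOver (IsLocalRing.maximalIdeal R)]
    (hP : Function.Bijective (Ideal.ResidueField.mapₐ (IsLocalRing.maximalIdeal R) P
      (Algebra.ofId R R') (P.over_def (IsLocalRing.maximalIdeal R)))) :
    ∃ σ : R' →ₐ[R] R, (IsLocalRing.maximalIdeal R).comap σ = P := by
  let φ : R' →ₐ[R] (IsLocalRing.maximalIdeal R).ResidueField :=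
    (AlgEquiv.ofBijective _ hP).symm.toAlgHom.comp (IsScalarTower.toAlgHom R R' P.ResidueField)
  obtain ⟨σ, hσ⟩ := exists_algHom_lift_of_etale
    (Ideal.algebraMap_residueField_surjective (IsLocalRing.maximalIdeal R)) φ
  refine ⟨σ, Ideal.ext fun r => ?_⟩
  calc σ r ∈ IsLocalRing.maximalIdeal R
      ↔ algebraMap R (IsLocalRing.maximalIdeal R).ResidueField (σ r) = 0 :=
        Ideal.algebraMap_residueField_eq_zero.symm
    _ ↔ φ r = 0 := by rw [← hσ]; rfl
    _ ↔ r ∈ P := by simp [φ]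

variable {A : Type*} [CommRing A] [Algebra R A]

theorem exists_isIdempotentElem_forall_liesOver_maximalIdeal_eq [Algebra.FiniteType R A]
    (q : Ideal A) [q.IsPrime] [q.LiesOver (IsLocalRing.maximalIdeal R)]
    [Algebra.QuasiFiniteAt R q] :
    ∃ e : A, IsIdempotentElem e ∧ e ∉ q ∧ ∀ q' : Ideal A, q'.IsPrime →
      q'.LiesOver (IsLocalRing.maximalIdeal R) → e ∉ q' → q' = q := by
  obtain ⟨R', _, _, _, P, _, _, e, he, Q, _, _, hQq, heQ, hP, -, huniq⟩ :=
    Algebra.exists_etale_isIdempotentElem_forall_liesOver_eq (IsLocalRing.maximalIdeal R) q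
  obtain ⟨σ, hσ⟩ := exists_algHom_comap_maximalIdeal_eq P hP
  let ψ : R' ⊗[R] A →ₐ[R] A :=
    (Algebra.TensorProduct.lid R A).toAlgHom.comp (Algebra.TensorProduct.map σ (.id R A))
  have hright (q' : Ideal A) :
      (q'.comap ψ.toRingHom).comap Algebra.TensorProduct.includeRight.toRingHom = q' := by
    ext a
    simp [ψ]
  have hliesOver (q' : Ideal A) [q'.LiesOver (IsLocalRing.maximalIdeal R)] :
      (q'.comap ψ.toRingHom).LiesOver P := by
    refine ⟨Ideal.ext fun r => ?_⟩
    rw [← hσ, Ideal.mem_comap, q'.mem_of_liesOver (IsLocalRing.maximalIdeal R)]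
    simp [ψ, Algebra.smul_def]
  have hQ : Q = q.comap ψ.toRingHom :=
    have := hliesOver q
    Ideal.eq_of_comap_eq_comap_of_bijective_residueFieldMap hP _ _ (by rw [hQq, hright])
  refine ⟨ψ e, he.map ψ, fun h => heQ (hQ ▸ h), fun q' _ _ heq' => ?_⟩
  rw [← hright q', huniq _ inferInstance (hliesOver q') heq', hQq]

end Henselian

theorem henselian_finite_product_of_localizations_general
    (R A : Type*) [CommRing R] [HenselianLocalRing R] [CommRing A] [Algebra R A]
    [Module.Finite R A] :
    Finite (MaximalSpectrum A) ∧ Function.Bijective (MaximalSpectrum.toPiLocalization A) := by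
  have hfin := finite_maximalSpectrum_of_quasiFinite R A
  refine ⟨hfin, toPiLocalization_bijective_of_forall_exists_isIdempotentElem fun N _ => ?_⟩
  have := liesOver_maximalIdeal_of_isIntegral (R := R) N
  obtain ⟨e, he, heN, heN'⟩ := exists_isIdempotentElem_forall_liesOver_maximalIdeal_eq (R := R) N
  exact ⟨e, he, heN, fun M hM => heN' M hM.isPrime (liesOver_maximalIdeal_of_isIntegral M)⟩

/-- A module-finite extension of a Henselian local ring is the product of its
localizations at its finitely many maximal ideals. -/
theorem henselian_finite_product_of_localizations
    (R A : Type*) [CommRing R] [IsLocalRing R] [HenselianLocalRing R]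
    [CommRing A] [Algebra R A] (hinj : Function.Injective (algebraMap R A))
    [Module.Finite R A] :
    {N : Ideal A | N.IsMaximal}.Finite ∧
      Nonempty (A ≃+* ((N : {N : Ideal A // N.IsMaximal}) →
        @Localization.AtPrime A _ N.1 N.2.isPrime)) := by
  obtain ⟨hfin, hbij⟩ := henselian_finite_product_of_localizations_general R A
  exact ⟨(MaximalSpectrum.equivSubtype A).finite_iff.mp hfin, ⟨(RingEquiv.ofBijective _ hbij).trans
    (RingEquiv.piCongrLeft' _ (MaximalSpectrum.equivSubtype A))⟩⟩
end
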